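/- Let Ω = (−h₁/2, h₁/2)×(−h₂/2, h₂/2)×(−h₃/2, h₃/2) with h₁,h₂,h₃ > 0 and Γ = ∂Ω (the whole boundary of the parallelepiped). Then the sharp constant C₁(Ω,Γ) in the inequality ‖w‖_{L²(Ω)} ≤ C₁‖∇w‖_{L²(Ω)} for all w ∈ H̃¹(Ω,Γ) is equal to (1/π)·max{h₁, h₂, h₃}. -/

import Mathlib

open MeasureTheory Real

/-!
Normalize all integrals over the box to expectations `E` over independent uniform coordinates, and
write `m = E w`, `bᵢ` for the mean of `w` over the two faces orthogonal to direction `i`.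

On a segment of length `h` in direction `i`, subtract from `w` the midpoint of its two end values:
the result takes opposite values at the two ends, so Wirtinger's inequality holds for it with the
constant `h / π`. Splitting its mean square into variance and squared mean and averaging over all
segments gives `E (Varᵢ w) + (m - bᵢ)² ≤ (hᵢ / π)² E (∂ᵢ w)²`.

The Efron–Stein inequality bounds `Var w` by `∑ i, E (Varᵢ w)`. The zero boundary mean says that `0`
is a weighted average of the `bᵢ`, with the face areas, proportional to `1 / hᵢ`, as weights, so
`m² ≤ ∑ i, (m - bᵢ)²`. Adding up, `E w² ≤ ∑ i, (hᵢ / π)² E (∂ᵢ w)²`.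

Equality holds for `sin (π xᵢ / hᵢ)` with any `i`, which is odd and hence has zero boundary mean.
-/

open Set Function ProbabilityTheory Filter
open scoped Topology

section Wirtinger

theorem tan_mul_sq_sub_le_integral {v : ℝ → ℝ} (hv : ContDiff ℝ 1 v) {k c a b : ℝ} (hab : a ≤ b)
    (hcos : ∀ t ∈ Icc a b, cos (k * (t - c)) ≠ 0) :
    k * tan (k * (a - c)) * v a ^ 2 - k * tan (k * (b - c)) * v b ^ 2 ≤
      ∫ t in a..b, (deriv v t ^ 2 - k ^ 2 * v t ^ 2) := by
  have hderiv : ∀ t ∈ Icc a b, HasDerivAt (fun s ↦ -(k * tan (k * (s - c)) * v s ^ 2))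
      (-(k * (1 / cos (k * (t - c)) ^ 2 * k) * v t ^ 2 +
        k * tan (k * (t - c)) * (2 * v t * deriv v t))) t := fun t ht ↦ by
    have hlin : HasDerivAt (fun s ↦ k * (s - c)) k t := by
      simpa using ((hasDerivAt_id t).sub_const c).const_mul k
    have htan : HasDerivAt (fun s ↦ tan (k * (s - c))) (1 / cos (k * (t - c)) ^ 2 * k) t :=
      HasDerivAt.comp t (hasDerivAt_tan (hcos t ht)) hlin
    have hsq : HasDerivAt (fun s ↦ v s ^ 2) (2 * v t * deriv v t) t := by
      simpa using (hv.differentiable one_ne_zero t).hasDerivAt.fun_pow 2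
    exact ((htan.const_mul k).mul hsq).neg
  have hcont : Continuous fun t ↦ deriv v t ^ 2 - k ^ 2 * v t ^ 2 := by
    have := hv.continuous_deriv_one
    have := hv.continuous
    fun_prop
  have hle := intervalIntegral.sub_le_integral_of_hasDeriv_right_of_le hab
    (fun t ht ↦ (hderiv t ht).continuousAt.continuousWithinAt)
    (fun t ht ↦ (hderiv t (Ioo_subset_Icc_self ht)).hasDerivWithinAt)
    hcont.continuousOn.integrableOn_Icc fun t ht ↦ ?_
  · linarith
  · have hsec : 1 / cos (k * (t - c)) ^ 2 = 1 + tan (k * (t - c)) ^ 2 := by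
      rw [one_div, ← inv_one_add_tan_sq (hcos t (Ioo_subset_Icc_self ht)), inv_inv]
    rw [hsec]
    linarith [sq_nonneg (deriv v t + k * tan (k * (t - c)) * v t)]

theorem sq_mul_integral_sq_le_of_antiperiodic {v : ℝ → ℝ} (hv : ContDiff ℝ 1 v) {a h k : ℝ}
    (hk : 0 ≤ k) (hkh : k * h < π) (hh : 0 ≤ h) (hanti : v (a + h) = -v a) :
    k ^ 2 * ∫ t in a..(a + h), v t ^ 2 ≤ ∫ t in a..(a + h), deriv v t ^ 2 := by
  have hvc := hv.continuous
  have := hv.continuous_deriv_one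
  obtain ⟨t₀, ⟨hat₀, ht₀h⟩, hzero⟩ : ∃ t ∈ Icc a (a + h), v t = 0 := by
    rw [← uIcc_of_le (by linarith)]
    refine intermediate_value_uIcc hvc.continuousOn ?_
    rw [hanti, mem_uIcc]
    rcases le_total 0 (v a) with hnonneg | hnonpos
    · exact .inr ⟨by linarith, hnonneg⟩
    · exact .inl ⟨hnonpos, by linarith⟩
  have hcos : ∀ s, |s| ≤ h / 2 → cos (k * s) ≠ 0 := fun s hs ↦ by
    rw [abs_le] at hs
    exact (cos_pos_of_mem_Ioo ⟨by nlinarith, by nlinarith⟩).ne'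
  have hleft := tan_mul_sq_sub_le_integral hv (k := k) (c := t₀ - h / 2) hat₀
    fun t ht ↦ hcos _ (abs_le.2 ⟨by linarith [ht.1], by linarith [ht.2]⟩)
  have hright := tan_mul_sq_sub_le_integral hv (k := k) (c := t₀ + h / 2) ht₀h
    fun t ht ↦ hcos _ (abs_le.2 ⟨by linarith [ht.1], by linarith [ht.2]⟩)
  -- `k * tan (k * (t - c))` takes the same value at `a` for the first phase `c` as at `a + h` for
  -- the second one, and `v ^ 2` agrees at the two ends, so the boundary terms cancel.
  have hphase : a + h - (t₀ + h / 2) = a - (t₀ - h / 2) := by ring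
  rw [hzero, hphase, hanti] at hright
  rw [hzero] at hleft
  have hint : ∀ x y, IntervalIntegrable (fun t ↦ deriv v t ^ 2 - k ^ 2 * v t ^ 2) volume x y :=
    fun x y ↦ (by fun_prop : Continuous _).intervalIntegrable x y
  have hnonneg : 0 ≤ ∫ t in a..(a + h), (deriv v t ^ 2 - k ^ 2 * v t ^ 2) := by
    rw [← intervalIntegral.integral_add_adjacent_intervals (hint a t₀) (hint t₀ (a + h))]
    linarith
  rw [intervalIntegral.integral_sub ((by fun_prop : Continuous _).intervalIntegrable _ _)
    ((by fun_prop : Continuous _).intervalIntegrable _ _),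
    intervalIntegral.integral_const_mul] at hnonneg
  linarith

theorem integral_sq_le_of_antiperiodic {v : ℝ → ℝ} (hv : ContDiff ℝ 1 v) {a h : ℝ}
    (hh : 0 < h) (hanti : v (a + h) = -v a) :
    ∫ t in a..(a + h), v t ^ 2 ≤ (h / π) ^ 2 * ∫ t in a..(a + h), deriv v t ^ 2 := by
  have hlim : Tendsto (fun k ↦ k ^ 2 * ∫ t in a..(a + h), v t ^ 2) (𝓝[<] (π / h))
      (𝓝 ((π / h) ^ 2 * ∫ t in a..(a + h), v t ^ 2)) :=
    (by fun_prop : Continuous _).continuousWithinAt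
  have hsharp := le_of_tendsto hlim <| by
    filter_upwards [Ioo_mem_nhdsLT (show 0 < π / h by positivity)] with k hk
    exact sq_mul_integral_sq_le_of_antiperiodic hv hk.1.le ((lt_div_iff₀ hh).1 hk.2) hh.le hanti
  calc ∫ t in a..(a + h), v t ^ 2
      = (h / π) ^ 2 * ((π / h) ^ 2 * ∫ t in a..(a + h), v t ^ 2) := by field_simp
    _ ≤ _ := by gcongr

end Wirtinger

section EfronStein

variable {α β : Type*} [MeasurableSpace α] [MeasurableSpace β] {μ : Measure α} {ν : Measure β}
  [IsProbabilityMeasure μ] [IsProbabilityMeasure ν]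

theorem sq_integral_le_integral_sq {f : α → ℝ} (hf : MemLp f 2 μ) :
    (∫ x, f x ∂μ) ^ 2 ≤ ∫ x, f x ^ 2 ∂μ := by
  have h := variance_nonneg f μ
  rw [variance_eq_sub hf] at h
  simpa using h

variable {f : α × β → ℝ}

theorem ae_memLp_two_section (hf : MemLp f 2 (μ.prod ν)) :
    ∀ᵐ x ∂μ, MemLp (fun y ↦ f (x, y)) 2 ν := by
  filter_upwards [hf.aestronglyMeasurable.prodMk_left, hf.integrable_sq.prod_right_ae] with x hm hi
  exact (memLp_two_iff_integrable_sq hm).2 hi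

theorem memLp_two_integral_section (hf : MemLp f 2 (μ.prod ν)) :
    MemLp (fun x ↦ ∫ y, f (x, y) ∂ν) 2 μ := by
  have hm : AEStronglyMeasurable (fun x ↦ ∫ y, f (x, y) ∂ν) μ :=
    hf.aestronglyMeasurable.integral_prod_right'
  refine (memLp_two_iff_integrable_sq hm).2
    (hf.integrable_sq.integral_prod_left.mono' (hm.pow 2) ?_)
  filter_upwards [ae_memLp_two_section hf] with x hx
  rw [norm_of_nonneg (sq_nonneg _)]
  exact sq_integral_le_integral_sq hx

theorem variance_section_ae_eq (hf : MemLp f 2 (μ.prod ν)) :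
    (fun x ↦ Var[fun y ↦ f (x, y); ν]) =ᵐ[μ]
      fun x ↦ ∫ y, f (x, y) ^ 2 ∂ν - (∫ y, f (x, y) ∂ν) ^ 2 := by
  filter_upwards [ae_memLp_two_section hf] with x hx
  simpa using variance_eq_sub hx

theorem integrable_variance_section (hf : MemLp f 2 (μ.prod ν)) :
    Integrable (fun x ↦ Var[fun y ↦ f (x, y); ν]) μ :=
  (hf.integrable_sq.integral_prod_left.sub (memLp_two_integral_section hf).integrable_sq).congr
    (variance_section_ae_eq hf).symm

theorem integral_variance_section (hf : MemLp f 2 (μ.prod ν)) :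
    ∫ x, Var[fun y ↦ f (x, y); ν] ∂μ =
      ∫ p, f p ^ 2 ∂μ.prod ν - ∫ x, (∫ y, f (x, y) ∂ν) ^ 2 ∂μ := by
  rw [integral_congr_ae (variance_section_ae_eq hf), integral_sub
    hf.integrable_sq.integral_prod_left (memLp_two_integral_section hf).integrable_sq,
    integral_prod _ hf.integrable_sq]

theorem variance_prod_eq (hf : MemLp f 2 (μ.prod ν)) :
    Var[f; μ.prod ν] =
      ∫ x, Var[fun y ↦ f (x, y); ν] ∂μ + Var[fun x ↦ ∫ y, f (x, y) ∂ν; μ] := by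
  rw [integral_variance_section hf, variance_eq_sub hf,
    variance_eq_sub (memLp_two_integral_section hf),
    integral_prod _ (hf.integrable one_le_two)]
  simp

theorem variance_integral_le (hf : MemLp f 2 (μ.prod ν)) :
    Var[fun x ↦ ∫ y, f (x, y) ∂ν; μ] ≤ ∫ y, Var[fun x ↦ f (x, y); μ] ∂ν := by
  have hswap : MemLp (fun q : β × α ↦ f q.swap) 2 (ν.prod μ) :=
    hf.comp_measurePreserving Measure.measurePreserving_swap
  have hmean : MemLp (fun y ↦ ∫ x, f (x, y) ∂μ) 2 ν := memLp_two_integral_section hswap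
  let g : α × β → ℝ := fun p ↦ f p - ∫ x, f (x, p.2) ∂μ
  have hg : MemLp g 2 (μ.prod ν) := hf.sub (hmean.comp_snd μ)
  have hcenter : (fun x ↦ ∫ y, f (x, y) ∂ν - ∫ x, ∫ y, f (x, y) ∂ν ∂μ) =ᵐ[μ]
      fun x ↦ ∫ y, g (x, y) ∂ν := by
    filter_upwards [ae_memLp_two_section hf] with x hx
    rw [integral_sub (hx.integrable one_le_two) (hmean.integrable one_le_two),
      integral_integral_swap (f := fun x y ↦ f (x, y)) (hf.integrable one_le_two)]
  calc Var[fun x ↦ ∫ y, f (x, y) ∂ν; μ]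
      = ∫ x, (∫ y, g (x, y) ∂ν) ^ 2 ∂μ := by
        rw [variance_eq_integral (memLp_two_integral_section hf).aemeasurable]
        exact integral_congr_ae (hcenter.fun_comp (· ^ 2))
    _ ≤ ∫ x, ∫ y, g (x, y) ^ 2 ∂ν ∂μ :=
        integral_mono_ae (memLp_two_integral_section hg).integrable_sq
          hg.integrable_sq.integral_prod_left <| by
            filter_upwards [ae_memLp_two_section hg] with x hx
            exact sq_integral_le_integral_sq hx
    _ = ∫ y, ∫ x, g (x, y) ^ 2 ∂μ ∂ν := integral_integral_swap hg.integrable_sq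
    _ = ∫ y, Var[fun x ↦ f (x, y); μ] ∂ν := by
        refine integral_congr_ae ?_
        filter_upwards [ae_memLp_two_section hswap] with y hy
        exact (variance_eq_integral hy.aemeasurable).symm

theorem variance_prod_le (hf : MemLp f 2 (μ.prod ν)) :
    Var[f; μ.prod ν] ≤
      ∫ y, Var[fun x ↦ f (x, y); μ] ∂ν + ∫ x, Var[fun y ↦ f (x, y); ν] ∂μ := by
  rw [variance_prod_eq hf, add_comm]
  gcongr
  exact variance_integral_le hf

end EfronStein

theorem integral_comp_of_measurePreserving {α β : Type*} [MeasurableSpace α] [MeasurableSpace β]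
    {μ : Measure α} {ν : Measure β} {φ : α → β} (hφ : MeasurePreserving φ μ ν) {f : β → ℝ}
    (hf : AEStronglyMeasurable f ν) : ∫ x, f (φ x) ∂μ = ∫ y, f y ∂ν := by
  rw [← hφ.map_eq] at hf
  rw [← integral_map hφ.aemeasurable hf, hφ.map_eq]

theorem measurePreserving_update {ι : Type*} [Fintype ι] [DecidableEq ι] {α : ι → Type*}
    [∀ i, MeasurableSpace (α i)] (μ : ∀ i, Measure (α i)) [∀ i, IsProbabilityMeasure (μ i)]
    (i : ι) :
    MeasurePreserving (fun p : (∀ j, α j) × α i ↦ update p.1 i p.2)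
      ((Measure.pi μ).prod (μ i)) (Measure.pi μ) := by
  have hmeas : Measurable fun p : (∀ j, α j) × α i ↦ update p.1 i p.2 := by
    fun_prop
  refine ⟨hmeas, (Measure.pi_eq fun s hs ↦ ?_).symm⟩
  have hpre : (fun p : (∀ j, α j) × α i ↦ update p.1 i p.2) ⁻¹' univ.pi s =
      univ.pi (update s i univ) ×ˢ s i := by
    ext p
    simp only [mem_preimage, mem_univ_pi, mem_prod]
    rw [forall_update_iff p.1 fun j x ↦ x ∈ s j, forall_update_iff s fun j t ↦ p.1 j ∈ t]
    simp [and_comm]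
  rw [Measure.map_apply hmeas (.univ_pi hs), hpre, Measure.prod_prod, Measure.pi_pi,
    ← Finset.mul_prod_erase _ _ (Finset.mem_univ i),
    ← Finset.mul_prod_erase (f := fun j ↦ μ j (s j)) _ (Finset.mem_univ i), update_self,
    measure_univ, one_mul, mul_comm]
  congr 1
  exact Finset.prod_congr rfl fun j hj ↦ by rw [update_of_ne (Finset.ne_of_mem_erase hj)]

theorem measurePreserving_finCons {n : ℕ} {α : Fin (n + 1) → Type*}
    [∀ i, MeasurableSpace (α i)] (μ : ∀ i, Measure (α i)) [∀ i, SigmaFinite (μ i)] :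
    MeasurePreserving (fun p : α 0 × (∀ j : Fin n, α j.succ) ↦ Fin.cons p.1 p.2)
      ((μ 0).prod (Measure.pi fun j ↦ μ j.succ)) (Measure.pi μ) := by
  have hsymm := (measurePreserving_piFinSuccAbove μ 0).symm
  have hcoe : ⇑(MeasurableEquiv.piFinSuccAbove α 0).symm = fun p ↦ Fin.cons p.1 p.2 := by
    funext p
    exact Fin.insertNth_zero p.1 p.2
  rwa [hcoe] at hsymm

section Update

variable {ι : Type*} [Fintype ι] [DecidableEq ι] {α : ι → Type*} [∀ i, MeasurableSpace (α i)]
  {μ : ∀ i, Measure (α i)} [∀ i, IsProbabilityMeasure (μ i)] {f : (∀ i, α i) → ℝ}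

theorem integrable_integral_update (hf : Integrable f (Measure.pi μ)) (i : ι) :
    Integrable (fun x ↦ ∫ t, f (update x i t) ∂μ i) (Measure.pi μ) :=
  Integrable.integral_prod_left (f := fun p ↦ f (update p.1 i p.2))
    ((measurePreserving_update μ i).integrable_comp_of_integrable hf)

theorem integral_integral_update (hf : Integrable f (Measure.pi μ)) (i : ι) :
    ∫ x, ∫ t, f (update x i t) ∂μ i ∂Measure.pi μ = ∫ x, f x ∂Measure.pi μ := by
  have hupd := measurePreserving_update μ i
  rw [← integral_prod (fun p ↦ f (update p.1 i p.2)) (hupd.integrable_comp_of_integrable hf),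
    integral_comp_of_measurePreserving hupd hf.aestronglyMeasurable]

theorem memLp_two_integral_update (hf : MemLp f 2 (Measure.pi μ)) (i : ι) :
    MemLp (fun x ↦ ∫ t, f (update x i t) ∂μ i) 2 (Measure.pi μ) :=
  memLp_two_integral_section (f := fun p ↦ f (update p.1 i p.2))
    (hf.comp_measurePreserving (measurePreserving_update μ i))

theorem integrable_variance_update (hf : MemLp f 2 (Measure.pi μ)) (i : ι) :
    Integrable (fun x ↦ Var[fun t ↦ f (update x i t); μ i]) (Measure.pi μ) :=
  integrable_variance_section (f := fun p ↦ f (update p.1 i p.2))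
    (hf.comp_measurePreserving (measurePreserving_update μ i))

theorem sq_integral_sub_le_integral_sq_update {g : (∀ i, α i) → ℝ} (hf : MemLp f 2 (Measure.pi μ))
    (hg : MemLp g 2 (Measure.pi μ)) (i : ι) :
    (∫ x, f x ∂Measure.pi μ - ∫ x, g x ∂Measure.pi μ) ^ 2 ≤
      ∫ x, (∫ t, f (update x i t) ∂μ i - g x) ^ 2 ∂Measure.pi μ := by
  have hmean := memLp_two_integral_update hf i
  rw [← integral_integral_update (hf.integrable one_le_two) i,
    ← integral_sub (hmean.integrable one_le_two) (hg.integrable one_le_two)]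
  exact sq_integral_le_integral_sq (hmean.sub hg)

end Update

theorem variance_pi_le {n : ℕ} {α : Fin n → Type*} [∀ i, MeasurableSpace (α i)]
    {μ : ∀ i, Measure (α i)} [∀ i, IsProbabilityMeasure (μ i)] {f : (∀ i, α i) → ℝ}
    (hf : MemLp f 2 (Measure.pi μ)) :
    Var[f; Measure.pi μ] ≤
      ∑ i, ∫ x, Var[fun t ↦ f (update x i t); μ i] ∂Measure.pi μ := by
  induction n with
  | zero =>
    rw [Measure.pi_of_empty]
    simp
  | succ n ih =>
    have hcons := measurePreserving_finCons μ
    let g (p : α 0 × ∀ j : Fin n, α j.succ) : ℝ := f (Fin.cons p.1 p.2)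
    let ρ := (μ 0).prod (Measure.pi fun j : Fin n ↦ μ j.succ)
    have hg : MemLp g 2 ρ := hf.comp_measurePreserving hcons
    let V (i : Fin (n + 1)) (p : α 0 × ∀ j : Fin n, α j.succ) : ℝ :=
      Var[fun t ↦ f (update (Fin.cons p.1 p.2) i t); μ i]
    have hV_int (i) : Integrable (V i) ρ :=
      hcons.integrable_comp_of_integrable (integrable_variance_update hf i)
    have hV (i) : ∫ p, V i p ∂ρ = ∫ x, Var[fun t ↦ f (update x i t); μ i] ∂Measure.pi μ :=
      integral_comp_of_measurePreserving hcons
        (integrable_variance_update hf i).aestronglyMeasurable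
    have hhead : ∫ y, Var[fun t ↦ g (t, y); μ 0] ∂(Measure.pi fun j : Fin n ↦ μ j.succ) =
        ∫ p, V 0 p ∂ρ := by
      rw [integral_prod _ (hV_int 0)]
      simp [V, g, Fin.update_cons_zero]
    have htail : ∫ t, Var[fun y ↦ g (t, y); Measure.pi fun j : Fin n ↦ μ j.succ] ∂μ 0 ≤
        ∑ j : Fin n, ∫ p, V j.succ p ∂ρ := by
      rw [Finset.sum_congr rfl fun j _ ↦ integral_prod _ (hV_int (Fin.succ j)),
        ← integral_finsetSum _ fun j _ ↦ (hV_int (Fin.succ j)).integral_prod_left]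
      refine integral_mono_ae (integrable_variance_section hg)
        (integrable_finsetSum _ fun j _ ↦ (hV_int (Fin.succ j)).integral_prod_left) ?_
      filter_upwards [ae_memLp_two_section hg] with t ht
      simpa only [V, ← Fin.cons_update] using ih ht
    calc Var[f; Measure.pi μ]
        = Var[g; ρ] := (hcons.variance_fun_comp hf.aemeasurable).symm
      _ ≤ _ := variance_prod_le hg
      _ ≤ ∫ p, V 0 p ∂ρ + ∑ j : Fin n, ∫ p, V j.succ p ∂ρ := add_le_add hhead.le htail
      _ = _ := by simp only [hV, Fin.sum_univ_succ]

section CenteredUniform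

/-- The uniform probability distribution on the interval `(-h/2, h/2)`, for `0 < h`. Integrating
against it turns the averages over boxes and their faces into expectations. -/
noncomputable def centeredUniform (h : ℝ) : Measure ℝ :=
  volume[|Ioo (-(h / 2)) (h / 2)]

/-- The open box centred at the origin whose side in the `i`-th direction has length `h i`. -/
def centeredBox {ι : Type*} (h : ι → ℝ) : Set (ι → ℝ) :=
  univ.pi fun i ↦ Ioo (-(h i / 2)) (h i / 2)

theorem centeredUniform_eq_smul (h : ℝ) :
    centeredUniform h = (ENNReal.ofReal h)⁻¹ • volume.restrict (Ioo (-(h / 2)) (h / 2)) := by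
  rw [centeredUniform, ProbabilityTheory.cond, Real.volume_Ioo, sub_neg_eq_add, add_halves]

theorem isProbabilityMeasure_centeredUniform {h : ℝ} (hh : 0 < h) :
    IsProbabilityMeasure (centeredUniform h) :=
  cond_isProbabilityMeasure_of_finite (by simpa using hh) (by simp)

instance isNegInvariant_centeredUniform (h : ℝ) : (centeredUniform h).IsNegInvariant := by
  refine ⟨?_⟩
  have hsymm : (Neg.neg : ℝ → ℝ) ⁻¹' Ioo (-(h / 2)) (h / 2) = Ioo (-(h / 2)) (h / 2) := by simp
  have hneg := (Measure.measurePreserving_neg (volume : Measure ℝ)).restrict_preimage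
    (measurableSet_Ioo (a := -(h / 2)) (b := h / 2))
  rw [hsymm] at hneg
  rw [Measure.neg, centeredUniform_eq_smul, Measure.map_smul, hneg.map_eq]

theorem integral_centeredUniform {h : ℝ} (hh : 0 ≤ h) (f : ℝ → ℝ) :
    ∫ t, f t ∂centeredUniform h = h⁻¹ * ∫ t in -(h / 2)..(h / 2), f t := by
  rw [centeredUniform_eq_smul, integral_smul_measure, ENNReal.toReal_inv, ENNReal.toReal_ofReal hh,
    smul_eq_mul, ← integral_Ioc_eq_integral_Ioo,
    ← intervalIntegral.integral_of_le (by linarith)]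

variable {ι : Type*} [Fintype ι] {h : ι → ℝ}

theorem pi_centeredUniform_eq_smul (hh : ∀ i, 0 < h i) :
    Measure.pi (fun i ↦ centeredUniform (h i)) =
      (ENNReal.ofReal (∏ i, h i))⁻¹ • volume.restrict (centeredBox h) := by
  have (i : ι) := isProbabilityMeasure_centeredUniform (hh i)
  refine Measure.pi_eq fun s _ ↦ ?_
  simp_rw [centeredBox, centeredUniform_eq_smul, volume_pi, Measure.restrict_pi_pi,
    Measure.smul_apply, Measure.pi_pi, smul_eq_mul, Finset.prod_mul_distrib]
  rw [ENNReal.ofReal_prod_of_nonneg fun i _ ↦ (hh i).le,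
    ENNReal.prod_inv_distrib fun i _ j _ _ ↦ .inr (by simp)]

theorem setIntegral_centeredBox (hh : ∀ i, 0 < h i) (f : (ι → ℝ) → ℝ) :
    ∫ x in centeredBox h, f x =
      (∏ i, h i) * ∫ x, f x ∂Measure.pi fun i ↦ centeredUniform (h i) := by
  have hV : 0 < ∏ i, h i := Finset.prod_pos fun i _ ↦ hh i
  rw [pi_centeredUniform_eq_smul hh, integral_smul_measure, ENNReal.toReal_inv,
    ENNReal.toReal_ofReal hV.le, smul_eq_mul, mul_inv_cancel_left₀ hV.ne']

theorem memLp_pi_centeredUniform (hh : ∀ i, 0 < h i) {f : (ι → ℝ) → ℝ} (hf : Continuous f)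
    (p : ENNReal) : MemLp f p (Measure.pi fun i ↦ centeredUniform (h i)) := by
  have (i : ι) := isProbabilityMeasure_centeredUniform (hh i)
  obtain ⟨C, hC⟩ := (isCompact_univ_pi fun i ↦
    isCompact_Icc (a := -(h i / 2)) (b := h i / 2)).exists_bound_of_continuousOn hf.continuousOn
  refine .of_bound hf.aestronglyMeasurable C ?_
  rw [pi_centeredUniform_eq_smul hh]
  refine Measure.ae_smul_measure (ae_restrict_of_forall_mem ?_ fun x hx ↦ ?_) _
  · exact .univ_pi fun i ↦ measurableSet_Ioo
  · exact hC x fun i hi ↦ Ioo_subset_Icc_self (hx i hi)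

theorem memLp_centeredUniform {h : ℝ} (hh : 0 < h) {f : ℝ → ℝ} (hf : Continuous f)
    (p : ENNReal) : MemLp f p (centeredUniform h) := by
  have := isProbabilityMeasure_centeredUniform hh
  obtain ⟨C, hC⟩ := isCompact_Icc.exists_bound_of_continuousOn (s := Icc (-(h / 2)) (h / 2))
    hf.continuousOn
  refine .of_bound hf.aestronglyMeasurable C ?_
  rw [centeredUniform_eq_smul]
  exact Measure.ae_smul_measure (ae_restrict_of_forall_mem measurableSet_Ioo
    fun t ht ↦ hC t (Ioo_subset_Icc_self ht)) _

end CenteredUniform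

section Poincare

theorem variance_add_sq_sub_midpoint_le {h : ℝ} (hh : 0 < h) {u : ℝ → ℝ} (hu : ContDiff ℝ 1 u) :
    Var[u; centeredUniform h] +
        (∫ t, u t ∂centeredUniform h - (u (-(h / 2)) + u (h / 2)) / 2) ^ 2 ≤
      (h / π) ^ 2 * ∫ t, deriv u t ^ 2 ∂centeredUniform h := by
  have := isProbabilityMeasure_centeredUniform hh
  set e := (u (-(h / 2)) + u (h / 2)) / 2 with he
  have hmem := memLp_centeredUniform hh hu.continuous 2
  have hmem_sub : MemLp (fun t ↦ u t - e) 2 (centeredUniform h) := hmem.sub (memLp_const e)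
  have hwirtinger := integral_sq_le_of_antiperiodic (v := fun t ↦ u t - e) (a := -(h / 2))
    (hu.sub contDiff_const) hh (by rw [he, neg_add_eq_sub, sub_half]; ring)
  simp only [neg_add_eq_sub, sub_half, deriv_sub_const] at hwirtinger
  calc Var[u; centeredUniform h] + (∫ t, u t ∂centeredUniform h - e) ^ 2
      = ∫ t, (u t - e) ^ 2 ∂centeredUniform h := by
        rw [← variance_sub_const hmem.aestronglyMeasurable e,
          variance_eq_sub hmem_sub, integral_sub (hmem.integrable one_le_two) (integrable_const e)]
        simp
    _ ≤ (h / π) ^ 2 * ∫ t, deriv u t ^ 2 ∂centeredUniform h := by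
        rw [integral_centeredUniform hh.le, integral_centeredUniform hh.le, mul_left_comm]
        gcongr

theorem sq_le_sum_sq_sub_of_sum_mul_eq_zero {ι : Type*} {s : Finset ι} {c b : ι → ℝ}
    (hc : ∀ i ∈ s, 0 ≤ c i) (hpos : 0 < ∑ i ∈ s, c i) (hb : ∑ i ∈ s, c i * b i = 0) (m : ℝ) :
    m ^ 2 ≤ ∑ i ∈ s, (m - b i) ^ 2 := by
  have hmean : (∑ i ∈ s, c i) * m = ∑ i ∈ s, c i * (m - b i) := by
    simp only [mul_sub, Finset.sum_sub_distrib, hb, sub_zero, Finset.sum_mul]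
  refine le_of_mul_le_mul_left ?_ (pow_pos hpos 2)
  calc (∑ i ∈ s, c i) ^ 2 * m ^ 2
      = (∑ i ∈ s, c i * (m - b i)) ^ 2 := by rw [← mul_pow, hmean]
    _ ≤ (∑ i ∈ s, c i ^ 2) * ∑ i ∈ s, (m - b i) ^ 2 := Finset.sum_mul_sq_le_sq_mul_sq ..
    _ ≤ (∑ i ∈ s, c i) ^ 2 * ∑ i ∈ s, (m - b i) ^ 2 := by
        gcongr
        exact Finset.sum_sq_le_sq_sum_of_nonneg hc

theorem deriv_comp_update {ι : Type*} [Finite ι] [DecidableEq ι] {f : (ι → ℝ) → ℝ}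
    (hf : Differentiable ℝ f) (x : ι → ℝ) (i : ι) (t : ℝ) :
    deriv (fun s ↦ f (update x i s)) t = fderiv ℝ f (update x i t) (Pi.single i 1) :=
  have := Fintype.ofFinite ι
  ((hf _).hasFDerivAt.comp_hasDerivAt t (hasDerivAt_update x i t)).deriv

theorem integral_variance_update_add_sq_le {ι : Type*} [Fintype ι] [DecidableEq ι] {h : ι → ℝ}
    (hh : ∀ i, 0 < h i) {f : (ι → ℝ) → ℝ} (hf : ContDiff ℝ 1 f) (i : ι) :
    let P := Measure.pi fun j ↦ centeredUniform (h j)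
    ∫ x, Var[fun t ↦ f (update x i t); centeredUniform (h i)] ∂P +
        (∫ x, f x ∂P - ∫ x, (f (update x i (-(h i / 2))) + f (update x i (h i / 2))) / 2 ∂P) ^ 2 ≤
      (h i / π) ^ 2 * ∫ x, fderiv ℝ f x (Pi.single i 1) ^ 2 ∂P := by
  intro P
  have (j : ι) := isProbabilityMeasure_centeredUniform (hh j)
  let e (x : ι → ℝ) : ℝ := (f (update x i (-(h i / 2))) + f (update x i (h i / 2))) / 2
  let V (x : ι → ℝ) : ℝ := Var[fun t ↦ f (update x i t); centeredUniform (h i)]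
  let gap (x : ι → ℝ) : ℝ := ∫ t, f (update x i t) ∂centeredUniform (h i) - e x
  let D (x : ι → ℝ) : ℝ := fderiv ℝ f x (Pi.single i 1) ^ 2
  have hfc := hf.continuous
  have hf2 : MemLp f 2 P := memLp_pi_centeredUniform hh hfc 2
  have he2 : MemLp e 2 P := memLp_pi_centeredUniform hh (by fun_prop) 2
  have hV : Integrable V P := integrable_variance_update hf2 i
  have hgap : Integrable (fun x ↦ gap x ^ 2) P :=
    ((memLp_two_integral_update hf2 i).sub he2).integrable_sq
  have hD : Integrable D P := (memLp_pi_centeredUniform hh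
    ((hf.continuous_fderiv one_ne_zero).clm_apply continuous_const) 2).integrable_sq
  have hline (x : ι → ℝ) := variance_add_sq_sub_midpoint_le (hh i)
    (u := fun t ↦ f (update x i t)) (hf.comp (contDiff_update 1 x i))
  simp only [deriv_comp_update (hf.differentiable one_ne_zero)] at hline
  calc ∫ x, V x ∂P + (∫ x, f x ∂P - ∫ x, e x ∂P) ^ 2
      ≤ ∫ x, V x ∂P + ∫ x, gap x ^ 2 ∂P := by
        gcongr
        exact sq_integral_sub_le_integral_sq_update hf2 he2 i
    _ = ∫ x, (V x + gap x ^ 2) ∂P := (integral_add hV hgap).symm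
    _ ≤ ∫ x, (h i / π) ^ 2 * ∫ t, D (update x i t) ∂centeredUniform (h i) ∂P :=
        integral_mono (hV.add hgap) ((integrable_integral_update hD i).const_mul _) hline
    _ = (h i / π) ^ 2 * ∫ x, D x ∂P := by
        rw [integral_const_mul, integral_integral_update hD]

theorem integral_sq_le_sum_integral_fderiv_sq {n : ℕ} {h : Fin (n + 1) → ℝ} (hh : ∀ i, 0 < h i)
    {f : (Fin (n + 1) → ℝ) → ℝ} (hf : ContDiff ℝ 1 f)
    (hbdry : ∑ i, (h i)⁻¹ * ∫ x, (f (update x i (-(h i / 2))) + f (update x i (h i / 2)))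
      ∂(Measure.pi fun j ↦ centeredUniform (h j)) = 0) :
    ∫ x, f x ^ 2 ∂(Measure.pi fun j ↦ centeredUniform (h j)) ≤
      ∑ i, (h i / π) ^ 2 * ∫ x, fderiv ℝ f x (Pi.single i 1) ^ 2
        ∂(Measure.pi fun j ↦ centeredUniform (h j)) := by
  have (j : Fin (n + 1)) := isProbabilityMeasure_centeredUniform (hh j)
  set P := Measure.pi fun j ↦ centeredUniform (h j)
  let b (i) : ℝ := ∫ x, (f (update x i (-(h i / 2))) + f (update x i (h i / 2))) / 2 ∂P
  have hf2 : MemLp f 2 P := memLp_pi_centeredUniform hh hf.continuous 2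
  have hvar : Var[f; P] = ∫ x, f x ^ 2 ∂P - (∫ x, f x ∂P) ^ 2 := by
    simpa using variance_eq_sub hf2
  have hb : ∑ i, (h i)⁻¹ * b i = 0 := by
    simp only [b, integral_div, ← mul_div_assoc, ← Finset.sum_div, hbdry, zero_div]
  have hmean := sq_le_sum_sq_sub_of_sum_mul_eq_zero (fun i _ ↦ (inv_pos.2 (hh i)).le)
    (Finset.sum_pos (fun i _ ↦ inv_pos.2 (hh i)) Finset.univ_nonempty) hb (∫ x, f x ∂P)
  calc ∫ x, f x ^ 2 ∂P
      = Var[f; P] + (∫ x, f x ∂P) ^ 2 := by rw [hvar, sub_add_cancel]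
    _ ≤ ∑ i, ∫ x, Var[fun t ↦ f (update x i t); centeredUniform (h i)] ∂P +
        ∑ i, (∫ x, f x ∂P - b i) ^ 2 := add_le_add (variance_pi_le hf2) hmean
    _ ≤ _ := by
        rw [← Finset.sum_add_distrib]
        exact Finset.sum_le_sum fun i _ ↦ integral_variance_update_add_sq_le hh hf i

end Poincare

section EuclideanBox

/-- The open box `centeredBox h` as a subset of Euclidean space. -/
def euclideanBox {ι : Type*} (h : ι → ℝ) : Set (EuclideanSpace ℝ ι) :=
  WithLp.ofLp ⁻¹' centeredBox h

/-- The integral of `w` over the boundary of the box `euclideanBox h` with respect to surface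
measure, written as the sum over the coordinate directions `i` of the integrals over the two faces
`x i = -(h i / 2)` and `x i = h i / 2`, parametrized by the remaining coordinates. -/
noncomputable def boundaryIntegral {n : ℕ} (h : Fin (n + 1) → ℝ)
    (w : EuclideanSpace ℝ (Fin (n + 1)) → ℝ) : ℝ :=
  ∑ i : Fin (n + 1), ∫ y in centeredBox (i.removeNth h),
    (w (WithLp.toLp 2 (i.insertNth (-(h i / 2)) y)) + w (WithLp.toLp 2 (i.insertNth (h i / 2) y)))

theorem integral_comp_removeNth {n : ℕ} {α : Fin (n + 1) → Type*} [∀ i, MeasurableSpace (α i)]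
    (μ : ∀ i, Measure (α i)) [∀ i, IsProbabilityMeasure (μ i)] (i : Fin (n + 1))
    (f : (∀ j, α (i.succAbove j)) → ℝ) :
    ∫ x, f (i.removeNth x) ∂Measure.pi μ = ∫ y, f y ∂Measure.pi fun j ↦ μ (i.succAbove j) := by
  have hsplit := (measurePreserving_piFinSuccAbove μ i).integral_comp' fun p ↦ f p.2
  rw [integral_fun_snd, probReal_univ, one_smul] at hsplit
  exact hsplit

theorem boundaryIntegral_eq_prod_mul_sum {n : ℕ} {h : Fin (n + 1) → ℝ} (hh : ∀ i, 0 < h i)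
    (w : EuclideanSpace ℝ (Fin (n + 1)) → ℝ) :
    boundaryIntegral h w = (∏ i, h i) * ∑ i, (h i)⁻¹ *
      ∫ x, (w (WithLp.toLp 2 (update x i (-(h i / 2)))) +
        w (WithLp.toLp 2 (update x i (h i / 2)))) ∂Measure.pi fun j ↦ centeredUniform (h j) := by
  have (j : Fin (n + 1)) := isProbabilityMeasure_centeredUniform (hh j)
  rw [boundaryIntegral, Finset.mul_sum]
  refine Finset.sum_congr rfl fun i _ ↦ ?_
  have harea : (∏ j, h j) * (h i)⁻¹ = ∏ j, i.removeNth h j := by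
    rw [i.prod_univ_succAbove, mul_right_comm, mul_inv_cancel₀ (hh i).ne', one_mul]
    rfl
  rw [setIntegral_centeredBox (h := i.removeNth h) fun j ↦ hh (i.succAbove j), ← mul_assoc, harea]
  simp_rw [← Fin.insertNth_removeNth]
  exact congrArg _ (integral_comp_removeNth (fun j ↦ centeredUniform (h j)) i fun y ↦
    w (WithLp.toLp 2 (i.insertNth (-(h i / 2)) y)) +
      w (WithLp.toLp 2 (i.insertNth (h i / 2) y))).symm

theorem boundaryIntegral_eq_zero_of_odd {n : ℕ} {h : Fin (n + 1) → ℝ} (hh : ∀ i, 0 < h i)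
    {w : EuclideanSpace ℝ (Fin (n + 1)) → ℝ} (hw : w.Odd) : boundaryIntegral h w = 0 := by
  have (j : Fin (n + 1)) := isProbabilityMeasure_centeredUniform (hh j)
  rw [boundaryIntegral_eq_prod_mul_sum hh]
  refine mul_eq_zero_of_right _ (Finset.sum_eq_zero fun i _ ↦ mul_eq_zero_of_right _ ?_)
  refine self_eq_neg.1 ?_
  rw [← integral_neg]
  conv_lhs => rw [← integral_neg_eq_self]
  refine integral_congr_ae (.of_forall fun x ↦ ?_)
  have hface (c : ℝ) :
      w (WithLp.toLp 2 (update (-x) i (-c))) = -w (WithLp.toLp 2 (update x i c)) := by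
    rw [update_neg, WithLp.toLp_neg, hw]
  have hface' := hface (-(h i / 2))
  rw [neg_neg] at hface'
  simp only [hface, hface']
  ring

theorem setIntegral_euclideanBox {ι : Type*} [Fintype ι] {h : ι → ℝ} (hh : ∀ i, 0 < h i)
    (g : EuclideanSpace ℝ ι → ℝ) :
    ∫ x in euclideanBox h, g x =
      (∏ i, h i) * ∫ x, g (WithLp.toLp 2 x) ∂Measure.pi fun i ↦ centeredUniform (h i) := by
  rw [← setIntegral_centeredBox hh,
    ← (PiLp.volume_preserving_toLp ι).setIntegral_preimage_emb
      (MeasurableEquiv.toLp 2 (ι → ℝ)).measurableEmbedding]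
  rfl

theorem norm_gradient_sq_eq_sum {ι : Type*} [Fintype ι] [DecidableEq ι]
    {w : EuclideanSpace ℝ ι → ℝ} (hw : Differentiable ℝ w) (x : ι → ℝ) :
    ‖gradient w (WithLp.toLp 2 x)‖ ^ 2 =
      ∑ i, fderiv ℝ (fun y : ι → ℝ ↦ w (WithLp.toLp 2 y)) x (Pi.single i 1) ^ 2 := by
  have hcomp : fderiv ℝ (fun y : ι → ℝ ↦ w (WithLp.toLp 2 y)) x =
      fderiv ℝ w (WithLp.toLp 2 x) ∘L
        (EuclideanSpace.equiv ι ℝ).symm.toContinuousLinearMap :=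
    ((hw _).hasFDerivAt.comp x (EuclideanSpace.equiv ι ℝ).symm.hasFDerivAt).fderiv
  rw [EuclideanSpace.real_norm_sq_eq, hcomp]
  refine Finset.sum_congr rfl fun i _ ↦ ?_
  have hcoord : gradient w (WithLp.toLp 2 x) i =
      fderiv ℝ w (WithLp.toLp 2 x) (EuclideanSpace.single i 1) := by
    rw [← inner_gradient_left, EuclideanSpace.inner_single_right]
    simp
  rw [hcoord]
  rfl

theorem integral_sq_le_of_boundaryIntegral_eq_zero {n : ℕ} {h : Fin (n + 1) → ℝ}
    (hh : ∀ i, 0 < h i) {w : EuclideanSpace ℝ (Fin (n + 1)) → ℝ} (hw : ContDiff ℝ 1 w)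
    (hbdry : boundaryIntegral h w = 0) :
    ∫ x in euclideanBox h, w x ^ 2 ≤
      ((⨆ i, h i) / π) ^ 2 * ∫ x in euclideanBox h, ‖gradient w x‖ ^ 2 := by
  have hV : 0 < ∏ i, h i := Finset.prod_pos fun i _ ↦ hh i
  let f (x : Fin (n + 1) → ℝ) : ℝ := w (WithLp.toLp 2 x)
  have hf : ContDiff ℝ 1 f := hw.comp PiLp.contDiff_toLp
  have hD (i : Fin (n + 1)) : Integrable (fun x ↦ fderiv ℝ f x (Pi.single i 1) ^ 2)
      (Measure.pi fun j ↦ centeredUniform (h j)) := (memLp_pi_centeredUniform hh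
    ((hf.continuous_fderiv one_ne_zero).clm_apply continuous_const) 2).integrable_sq
  rw [boundaryIntegral_eq_prod_mul_sum hh, mul_eq_zero_iff_left hV.ne'] at hbdry
  rw [setIntegral_euclideanBox hh, setIntegral_euclideanBox hh, mul_left_comm]
  simp_rw [norm_gradient_sq_eq_sum (hw.differentiable one_ne_zero)]
  rw [integral_finsetSum _ fun i _ ↦ hD i, Finset.mul_sum]
  gcongr
  refine (integral_sq_le_sum_integral_fderiv_sq hh hf hbdry).trans (Finset.sum_le_sum fun i _ ↦ ?_)
  gcongr
  · exact div_nonneg (hh i).le pi_pos.le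
  · exact le_ciSup (finite_range h).bddAbove i

end EuclideanBox

section Sharpness

theorem integral_sin_sq_centeredUniform {h : ℝ} (hh : 0 < h) :
    ∫ t, sin (π / h * t) ^ 2 ∂centeredUniform h = 1 / 2 := by
  have hhalf : π / h * (h / 2) = π / 2 := by field_simp
  rw [integral_centeredUniform hh.le,
    intervalIntegral.integral_comp_mul_left (fun s ↦ sin s ^ 2) (by positivity), integral_sin_sq,
    mul_neg, hhalf, cos_neg, cos_pi_div_two, smul_eq_mul]
  field_simp
  ring

theorem integral_cos_sq_centeredUniform {h : ℝ} (hh : 0 < h) :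
    ∫ t, cos (π / h * t) ^ 2 ∂centeredUniform h = 1 / 2 := by
  have := isProbabilityMeasure_centeredUniform hh
  have hsin : Integrable (fun t ↦ sin (π / h * t) ^ 2) (centeredUniform h) :=
    (memLp_centeredUniform hh (by fun_prop) 2).integrable_sq
  simp_rw [cos_sq']
  rw [integral_sub (integrable_const 1) hsin, integral_sin_sq_centeredUniform hh]
  norm_num

variable {ι : Type*} [Fintype ι]

theorem hasGradientAt_comp_coord [DecidableEq ι] {g : ℝ → ℝ} {g' : ℝ} {x : EuclideanSpace ℝ ι}
    {i : ι} (hg : HasDerivAt g g' (x i)) :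
    HasGradientAt (fun y : EuclideanSpace ℝ ι ↦ g (y i)) (EuclideanSpace.single i g') x := by
  rw [hasGradientAt_iff_hasFDerivAt]
  refine (hg.comp_hasFDerivAt x (EuclideanSpace.proj i : _ →L[ℝ] ℝ).hasFDerivAt).congr_fderiv ?_
  ext y
  simp [EuclideanSpace.inner_single_left]

theorem norm_gradient_sin_coord_sq (k : ℝ) (x : EuclideanSpace ℝ ι) (i : ι) :
    ‖gradient (fun y : EuclideanSpace ℝ ι ↦ sin (k * y i)) x‖ ^ 2 = k ^ 2 * cos (k * x i) ^ 2 := by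
  have hg : HasDerivAt (fun t ↦ sin (k * t)) (cos (k * x i) * k) (x i) := by
    simpa using ((hasDerivAt_id (x i)).const_mul k).sin
  classical
  rw [(hasGradientAt_comp_coord hg).gradient, PiLp.norm_single, norm_eq_abs, sq_abs]
  ring

theorem setIntegral_sin_coord_sq {h : ι → ℝ} (hh : ∀ i, 0 < h i) (i : ι) :
    ∫ x in euclideanBox h, sin (π / h i * x i) ^ 2 =
      (∏ j, h j) / 2 := by
  have (j : ι) := isProbabilityMeasure_centeredUniform (hh j)
  rw [setIntegral_euclideanBox hh]
  have := integral_comp_eval (μ := fun j ↦ centeredUniform (h j)) (i := i)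
    (f := fun t ↦ sin (π / h i * t) ^ 2) (by fun_prop)
  rw [this, integral_sin_sq_centeredUniform (hh i), mul_one_div]

theorem setIntegral_norm_gradient_sin_coord_sq {h : ι → ℝ} (hh : ∀ i, 0 < h i) (i : ι) :
    ∫ x in euclideanBox h,
        ‖gradient (fun y : EuclideanSpace ℝ ι ↦ sin (π / h i * y i)) x‖ ^ 2 =
      (π / h i) ^ 2 * ((∏ j, h j) / 2) := by
  have (j : ι) := isProbabilityMeasure_centeredUniform (hh j)
  simp_rw [norm_gradient_sin_coord_sq, integral_const_mul]
  rw [setIntegral_euclideanBox hh]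
  have := integral_comp_eval (μ := fun j ↦ centeredUniform (h j)) (i := i)
    (f := fun t ↦ cos (π / h i * t) ^ 2) (by fun_prop)
  rw [this, integral_cos_sq_centeredUniform (hh i), mul_one_div]

end Sharpness

section FinThree

theorem setIntegral_centeredBox_fin_two (a b : ℝ) (g : (Fin 2 → ℝ) → ℝ) :
    ∫ y in centeredBox ![a, b], g y =
      ∫ p in Ioo (-(a / 2)) (a / 2) ×ˢ Ioo (-(b / 2)) (b / 2), g ![p.1, p.2] := by
  rw [← (volume_preserving_finTwoArrow ℝ).symm.setIntegral_preimage_emb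
    MeasurableEquiv.finTwoArrow.symm.measurableEmbedding]
  congr!
  ext p
  simp [centeredBox, Fin.forall_fin_two]

theorem boundaryIntegral_fin_three (h₁ h₂ h₃ : ℝ) (w : EuclideanSpace ℝ (Fin 3) → ℝ) :
    boundaryIntegral ![h₁, h₂, h₃] w =
      (∫ p in Ioo (-(h₂ / 2)) (h₂ / 2) ×ˢ Ioo (-(h₃ / 2)) (h₃ / 2),
        (w !₂[-(h₁ / 2), p.1, p.2] + w !₂[h₁ / 2, p.1, p.2])) +
      (∫ p in Ioo (-(h₁ / 2)) (h₁ / 2) ×ˢ Ioo (-(h₃ / 2)) (h₃ / 2),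
        (w !₂[p.1, -(h₂ / 2), p.2] + w !₂[p.1, h₂ / 2, p.2])) +
      (∫ p in Ioo (-(h₁ / 2)) (h₁ / 2) ×ˢ Ioo (-(h₂ / 2)) (h₂ / 2),
        (w !₂[p.1, p.2, -(h₃ / 2)] + w !₂[p.1, p.2, h₃ / 2])) := by
  have hremove₀ : Fin.removeNth 0 ![h₁, h₂, h₃] = ![h₂, h₃] := by ext j; fin_cases j <;> rfl
  have hremove₁ : Fin.removeNth 1 ![h₁, h₂, h₃] = ![h₁, h₃] := by ext j; fin_cases j <;> rfl
  have hremove₂ : Fin.removeNth 2 ![h₁, h₂, h₃] = ![h₁, h₂] := by ext j; fin_cases j <;> rfl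
  have hinsert₀ (a b c : ℝ) : Fin.insertNth 0 a ![b, c] = ![a, b, c] := by
    ext j; fin_cases j <;> rfl
  have hinsert₁ (a b c : ℝ) : Fin.insertNth 1 b ![a, c] = ![a, b, c] := by
    ext j; fin_cases j <;> rfl
  have hinsert₂ (a b c : ℝ) : Fin.insertNth 2 c ![a, b] = ![a, b, c] := by
    ext j; fin_cases j <;> rfl
  rw [boundaryIntegral, Fin.sum_univ_three, hremove₀, hremove₁, hremove₂]
  simp only [setIntegral_centeredBox_fin_two, hinsert₀, hinsert₁, hinsert₂]
  rfl

theorem euclideanBox_fin_three (h₁ h₂ h₃ : ℝ) :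
    euclideanBox ![h₁, h₂, h₃] =
      {x | x 0 ∈ Ioo (-(h₁ / 2)) (h₁ / 2) ∧ x 1 ∈ Ioo (-(h₂ / 2)) (h₂ / 2) ∧
        x 2 ∈ Ioo (-(h₃ / 2)) (h₃ / 2)} := by
  ext x
  simp [euclideanBox, centeredBox, Fin.forall_fin_succ]

theorem ciSup_vec_three {α : Type*} [ConditionallyCompleteLinearOrder α] (a b c : α) :
    ⨆ i, ![a, b, c] i = max a (max b c) := by
  refine le_antisymm (ciSup_le ?_) ?_
  · simp [Fin.forall_fin_succ]
  · have hle := le_ciSup (finite_range ![a, b, c]).bddAbove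
    exact max_le (hle 0) (max_le (hle 1) (hle 2))

end FinThree

theorem box_whole_boundary_C1_general {n : ℕ} (h : Fin (n + 1) → ℝ) (hh : ∀ i, 0 < h i) :
    IsLeast {C : ℝ | ∀ w : EuclideanSpace ℝ (Fin (n + 1)) → ℝ, ContDiff ℝ 1 w →
      boundaryIntegral h w = 0 →
        √(∫ x in euclideanBox h, w x ^ 2) ≤
          C * √(∫ x in euclideanBox h, ‖gradient w x‖ ^ 2)}
      (π⁻¹ * ⨆ i, h i) := by
  constructor
  · intro w hw hbdry
    have hH : 0 ≤ ⨆ i, h i := Real.iSup_nonneg fun i ↦ (hh i).le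
    refine (sqrt_le_sqrt (integral_sq_le_of_boundaryIntegral_eq_zero hh hw hbdry)).trans_eq ?_
    rw [sqrt_mul (sq_nonneg _), sqrt_sq (by positivity), div_eq_inv_mul]
  · intro C hC
    rw [inv_mul_le_iff₀ pi_pos]
    refine ciSup_le fun i ↦ ?_
    have hodd : (fun x : EuclideanSpace ℝ (Fin (n + 1)) ↦ sin (π / h i * x i)).Odd := fun x ↦ by
      simp only [PiLp.neg_apply, mul_neg, sin_neg]
    have hsin := hC _ (by fun_prop) (boundaryIntegral_eq_zero_of_odd hh hodd)
    have hV : 0 < ∏ j, h j := Finset.prod_pos fun j _ ↦ hh j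
    have hk : 0 < π / h i := div_pos pi_pos (hh i)
    rw [setIntegral_sin_coord_sq hh, setIntegral_norm_gradient_sin_coord_sq hh,
      sqrt_mul (sq_nonneg _), sqrt_sq hk.le, ← mul_assoc,
      le_mul_iff_one_le_left (by positivity), ← mul_div_assoc, one_le_div (hh i), mul_comm] at hsin
    exact hsin

/-- The sharp constant `C₁(Ω,Γ)` in `‖w‖_{L²(Ω)} ≤ C₁ ‖∇w‖_{L²(Ω)}` for functions
with zero mean trace on `Γ`, where `Ω = (−h₁/2,h₁/2) × (−h₂/2,h₂/2) × (−h₃/2,h₃/2)`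
and `Γ = ∂Ω` is the whole boundary of the parallelepiped, equals
`(1/π) · max {h₁, h₂, h₃}`. The mean over `∂Ω` is written as the sum of the
integrals over the six faces. -/
theorem box_whole_boundary_C1 (h₁ h₂ h₃ : ℝ)
    (hh₁ : 0 < h₁) (hh₂ : 0 < h₂) (hh₃ : 0 < h₃) :
    IsLeast {C : ℝ |
      ∀ w : EuclideanSpace ℝ (Fin 3) → ℝ, ContDiff ℝ 1 w →
        ((∫ p in Set.Ioo (-(h₂/2)) (h₂/2) ×ˢ Set.Ioo (-(h₃/2)) (h₃/2),
            (w !₂[-(h₁/2), p.1, p.2] + w !₂[h₁/2, p.1, p.2])) +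
         (∫ p in Set.Ioo (-(h₁/2)) (h₁/2) ×ˢ Set.Ioo (-(h₃/2)) (h₃/2),
            (w !₂[p.1, -(h₂/2), p.2] + w !₂[p.1, h₂/2, p.2])) +
         (∫ p in Set.Ioo (-(h₁/2)) (h₁/2) ×ˢ Set.Ioo (-(h₂/2)) (h₂/2),
            (w !₂[p.1, p.2, -(h₃/2)] + w !₂[p.1, p.2, h₃/2]))) = 0 →
        Real.sqrt (∫ x in {x : EuclideanSpace ℝ (Fin 3) |
            x 0 ∈ Set.Ioo (-(h₁/2)) (h₁/2) ∧ x 1 ∈ Set.Ioo (-(h₂/2)) (h₂/2) ∧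
              x 2 ∈ Set.Ioo (-(h₃/2)) (h₃/2)}, (w x) ^ 2) ≤
          C * Real.sqrt (∫ x in {x : EuclideanSpace ℝ (Fin 3) |
            x 0 ∈ Set.Ioo (-(h₁/2)) (h₁/2) ∧ x 1 ∈ Set.Ioo (-(h₂/2)) (h₂/2) ∧
              x 2 ∈ Set.Ioo (-(h₃/2)) (h₃/2)}, ‖gradient w x‖ ^ 2)}
      (π⁻¹ * max h₁ (max h₂ h₃)) := by
  simp only [← boundaryIntegral_fin_three, ← euclideanBox_fin_three, ← ciSup_vec_three]
  exact box_whole_boundary_C1_general _ (by simp [Fin.forall_fin_succ, hh₁, hh₂, hh₃])
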